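/- Let N ≥ 3, 0 < m < (N-2)/N, k > 0, and let B = B_k be the Barenblatt solution with extinction time T. Let u be a solution of the fast diffusion equation on ℝ^N × (0,T*) with T* > T and initial value u₀ = B(·,0) + f, where f ∈ L¹(ℝ^N) is nonnegative and radially symmetric. Assume: u₀ is radially symmetric and u(·,t) is radially symmetric for each t; u(x,t) ≥ B(x,t) on ℝ^N × (0,T); the contraction ∫_{ℝ^N}|u(x,t) - B(x,t)|dx ≤ ‖f‖_{L¹} holds for t ∈ (0,T); and u satisfies the Aronson–Bénilan inequality ∂ₜu ≤ u/((1-m)t) on (0,T*). Then for every t ∈ [T,T*), u(·,t) ∈ L¹(ℝ^N) with ‖u(·,t)‖_{L¹(ℝ^N)} ≤ ‖f‖_{L¹(ℝ^N)}, and for every t ∈ (T,T*) there exists a constant C(t) such that u(x,t) ≤ C(t)/|x|^{(N-2)/m} for all |x| > 1. -/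

import Mathlib

/-!
At time `T` the bound is Fatou's lemma: as `t ↑ T` the Barenblatt solution tends to `0` pointwise,
so the contraction estimate passes to the limit and `‖u(·,T)‖₁ ≤ ‖f‖₁` (`lintegral_at_T`).

After time `T` no comparison with a Barenblatt solution is available, and everything comes from the
potential `w(r) = ∫_T^t u(r,s)^m ds`. Since `Δw = u(·,t) - u(·,T)` and all functions are radial,
`r^(N-1) w'(r) = F(r)` with `F(r) = ∫_0^r ρ^(N-1) (u(ρ,t) - u(ρ,T)) dρ` (`flux_identity`, which rests
on the polar form `lapl_radial` of the Laplacian). The integrated Aronson–Bénilan inequality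
(`antitone_bound`) makes `u(·,s)`, for `s ∈ [T,t]`, at most a constant times `u(·,T)` and at least a
constant times `u(·,t)`. Hence `u(·,t)` is integrable, `F` has the limit
`L = ∫ρ^(N-1) u(ρ,t) dρ - ∫ρ^(N-1) u(ρ,T) dρ`, and `w` takes arbitrarily small values far out,
because `w ≤ C u(·,T)^m` and `u(·,T)` is integrable.

* If `L > 0`, then `w > 0` would be nondecreasing far out, a contradiction (`limit_nonpos`). So
  `L ≤ 0`, which says that the mass at time `t` is at most the mass at time `T`.
* Since `F` is bounded below, integrating `w' = r^(1-N) F` inwards from a far point where `w` is tiny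
  gives `w(r) ≤ C r^(2-N)` (`decay_of_flux`). As `w(r) ≥ c u(r,t)^m`, this is the claimed decay.
-/

open MeasureTheory Real Filter Topology RealInnerProductSpace

noncomputable section

abbrev Euc (N : ℕ) := EuclideanSpace ℝ (Fin N)

/-- Laplacian: trace of the second derivative. -/
def lapl {N : ℕ} (f : Euc N → ℝ) (x : Euc N) : ℝ :=
  ∑ i : Fin N, iteratedFDeriv ℝ 2 f x ![EuclideanSpace.single i 1, EuclideanSpace.single i 1]

/-- The constant C* = 2m(N-2-mN)/(1-m). -/
def Cst (N : ℕ) (m : ℝ) : ℝ := 2 * m * ((N : ℝ) - 2 - m * N) / (1 - m)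

/-- β = N/(N-2-Nm). -/
def betaC (N : ℕ) (m : ℝ) : ℝ := (N : ℝ) / ((N : ℝ) - 2 - N * m)

/-- γ = -β/N. -/
def gammaC (N : ℕ) (m : ℝ) : ℝ := -betaC N m / N

/-- Barenblatt solution with extinction time T. -/
def Bb (N : ℕ) (m T k : ℝ) (x : Euc N) (t : ℝ) : ℝ :=
  (Cst N m * (T - t) / (k * (T - t) ^ (2 * gammaC N m) + ‖x‖ ^ 2)) ^ (1 / (1 - m))

/-- Rescaled Barenblatt profile. -/
def BbTil (N : ℕ) (m k : ℝ) (x : Euc N) : ℝ :=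
  (Cst N m / (k + ‖x‖ ^ 2)) ^ (1 / (1 - m))

/-- u is a solution of the fast diffusion equation on ℝ^N × (0,T) with initial value u₀. -/
def IsFDESol (N : ℕ) (m T : ℝ) (u : Euc N → ℝ → ℝ) (u₀ : Euc N → ℝ) : Prop :=
  (∀ x : Euc N, ∀ t ∈ Set.Ioo (0:ℝ) T, 0 < u x t) ∧
  ContDiffOn ℝ (⊤ : ℕ∞) (fun p : Euc N × ℝ => u p.1 p.2) (Set.univ ×ˢ Set.Ioo (0:ℝ) T) ∧
  ContinuousOn (fun p : Euc N × ℝ => u p.1 p.2) (Set.univ ×ˢ Set.Ico (0:ℝ) T) ∧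
  (∀ x, u x 0 = u₀ x) ∧
  (∀ x : Euc N, ∀ t ∈ Set.Ioo (0:ℝ) T,
    deriv (fun s => u x s) t = lapl (fun y => u y t ^ m) x)

/-- Rescaled solution ũ(x,τ) = (T-t)^(-β) u(x (T-t)^γ, t), τ = -log(T-t). -/
def rescaleSol (N : ℕ) (m T : ℝ) (u : Euc N → ℝ → ℝ) (x : Euc N) (τ : ℝ) : ℝ :=
  Real.exp (betaC N m * τ) * u (Real.exp (-gammaC N m * τ) • x) (T - Real.exp (-τ))

/-- f is radially symmetric. -/
def IsRadial {N : ℕ} (f : Euc N → ℝ) : Prop := ∀ x y : Euc N, ‖x‖ = ‖y‖ → f x = f y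

/-! ### The Laplacian of a radial function -/

lemma hasDerivAt_line {N : ℕ} {v : Euc N → ℝ} (hv : ContDiff ℝ 2 v) (x e : Euc N) (τ : ℝ) :
    HasDerivAt (fun τ : ℝ => v (x + τ • e)) (fderiv ℝ v (x + τ • e) e) τ := by
  have h1 : HasDerivAt (fun τ : ℝ => x + τ • e) e τ := by
    simpa using ((hasDerivAt_id τ).smul_const e).const_add x
  exact ((hv.differentiable (by norm_num)) _).hasFDerivAt.comp_hasDerivAt τ h1

lemma hasDerivAt_line_two {N : ℕ} {v : Euc N → ℝ} (hv : ContDiff ℝ 2 v) (x e : Euc N) (τ : ℝ) :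
    HasDerivAt (fun τ : ℝ => fderiv ℝ v (x + τ • e) e)
      (iteratedFDeriv ℝ 2 v (x + τ • e) ![e, e]) τ := by
  have h1 : HasDerivAt (fun τ : ℝ => x + τ • e) e τ := by
    simpa using ((hasDerivAt_id τ).smul_const e).const_add x
  have h2 : ContDiff ℝ 1 (fderiv ℝ v) := hv.fderiv_right (by norm_num)
  have h3 := ((h2.differentiable (by norm_num)) (x + τ • e)).hasFDerivAt.comp_hasDerivAt τ h1
  have h4 := h3.clm_apply (hasDerivAt_const τ e)
  simpa [iteratedFDeriv_two_apply] using h4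

/-- The Laplacian of a radial `C²` function in polar form `h'' + (N - 1) h' / r`, evaluated on the
positive half of a coordinate axis. -/
lemma lapl_radial {N : ℕ} (i0 : Fin N) {v : Euc N → ℝ} (hv : ContDiff ℝ 2 v) (hr : IsRadial v)
    {r : ℝ} (hr0 : 0 < r) :
    lapl v (r • EuclideanSpace.single i0 1) =
      deriv (deriv fun ρ : ℝ => v (ρ • EuclideanSpace.single i0 1)) r
        + ((N : ℝ) - 1) * (deriv (fun ρ : ℝ => v (ρ • EuclideanSpace.single i0 1)) r / r) := by
  set e : Fin N → Euc N := fun i => EuclideanSpace.single i 1 with he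
  set h : ℝ → ℝ := fun ρ => v (ρ • e i0) with hh
  have hd1 : ∀ ρ, HasDerivAt h (fderiv ℝ v (ρ • e i0) (e i0)) ρ := fun ρ => by
    simpa using hasDerivAt_line hv 0 (e i0) ρ
  have hd1' : deriv h = fun ρ => fderiv ℝ v (ρ • e i0) (e i0) := funext fun ρ => (hd1 ρ).deriv
  have hd2 : HasDerivAt (deriv h) (iteratedFDeriv ℝ 2 v (r • e i0) ![e i0, e i0]) r := by
    rw [hd1']; simpa using hasDerivAt_line_two hv 0 (e i0) r
  -- along a direction orthogonal to the ray, `v` equals `h (√(r² + τ²))`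
  have key : ∀ i, i ≠ i0 →
      iteratedFDeriv ℝ 2 v (r • e i0) ![e i, e i] = deriv h r / r := by
    intro i hi
    have hs : ∀ τ : ℝ, HasDerivAt (fun τ : ℝ => √(r ^ 2 + τ ^ 2)) (τ / √(r ^ 2 + τ ^ 2)) τ := by
      intro τ
      have := (((hasDerivAt_pow 2 τ).const_add (r ^ 2))).sqrt (by positivity)
      convert this using 1
      have : √(r ^ 2 + τ ^ 2) ≠ 0 := by positivity
      field_simp
      ring
    have hfun : (fun τ : ℝ => v (r • e i0 + τ • e i)) = fun τ => h √(r ^ 2 + τ ^ 2) := by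
      funext τ
      apply hr
      have hin : inner ℝ (r • e i0) (τ • e i) = 0 := by
        simp [he, inner_smul_left, inner_smul_right, EuclideanSpace.inner_single_left, hi.symm]
      have h1 := norm_add_sq_eq_norm_sq_add_norm_sq_real hin
      have h2 : ‖r • e i0 + τ • e i‖ = √(r ^ 2 + τ ^ 2) := by
        rw [← Real.sqrt_sq (norm_nonneg (r • e i0 + τ • e i)), sq, h1]
        congr 1
        simp [he, norm_smul]
        ring
      rw [h2, norm_smul]
      simp [he, abs_of_nonneg (Real.sqrt_nonneg _)]
    have hd : (fun τ : ℝ => fderiv ℝ v (r • e i0 + τ • e i) (e i)) =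
        fun τ => deriv h √(r ^ 2 + τ ^ 2) / √(r ^ 2 + τ ^ 2) * τ := by
      funext τ
      have h1 := hasDerivAt_line hv (r • e i0) (e i) τ
      rw [hfun] at h1
      have h2 : HasDerivAt h (deriv h √(r ^ 2 + τ ^ 2)) √(r ^ 2 + τ ^ 2) := by
        rw [hd1']; exact hd1 _
      rw [h1.unique (HasDerivAt.comp (h₂ := h) τ h2 (hs τ))]
      ring
    have h1 := hasDerivAt_line_two hv (r • e i0) (e i) 0
    rw [hd] at h1
    have hs0 : √(r ^ 2 + (0 : ℝ) ^ 2) = r := by simp [Real.sqrt_sq hr0.le]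
    have h2 : DifferentiableAt ℝ (fun τ : ℝ => deriv h √(r ^ 2 + τ ^ 2) / √(r ^ 2 + τ ^ 2)) 0 := by
      refine DifferentiableAt.div ?_ (hs 0).differentiableAt (by rw [hs0]; exact hr0.ne')
      refine DifferentiableAt.comp (g := deriv h) 0 ?_ (hs 0).differentiableAt
      rw [hs0]; exact hd2.differentiableAt
    have h3 := h2.hasDerivAt.mul (hasDerivAt_id (0 : ℝ))
    have h4 := h1.unique h3
    simp only [zero_smul, add_zero, id, mul_zero, mul_one, zero_add] at h4
    rw [h4, hs0]
  unfold lapl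
  rw [← Finset.add_sum_erase _ _ (Finset.mem_univ i0), hd2.deriv]
  congr 1
  rw [Finset.sum_congr rfl (fun i hi => key i (Finset.ne_of_mem_erase hi))]
  rw [Finset.sum_const, Finset.card_erase_of_mem (Finset.mem_univ _), Finset.card_univ,
    Fintype.card_fin, nsmul_eq_mul, Nat.cast_sub (by have := i0.pos; omega)]
  simp

/-! ### The flux identity for radial solutions -/

section Strip

variable {S : ℝ} {W : ℝ × ℝ → ℝ}

lemma contDiffAt_strip (hW : ContDiffOn ℝ (⊤ : ℕ∞) W (Set.univ ×ˢ Set.Ioo (0 : ℝ) S))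
    (r : ℝ) {s : ℝ} (hs : s ∈ Set.Ioo (0 : ℝ) S) : ContDiffAt ℝ (⊤ : ℕ∞) W (r, s) :=
  hW.contDiffAt ((isOpen_univ.prod isOpen_Ioo).mem_nhds ⟨trivial, hs⟩)

lemma hasDerivAt_fst (hW : ContDiffOn ℝ (⊤ : ℕ∞) W (Set.univ ×ˢ Set.Ioo (0 : ℝ) S))
    (r : ℝ) {s : ℝ} (hs : s ∈ Set.Ioo (0 : ℝ) S) :
    HasDerivAt (fun r => W (r, s)) (fderiv ℝ W (r, s) (1, 0)) r := by
  have h1 := ((contDiffAt_strip hW r hs).differentiableAt (by simp)).hasFDerivAt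
  have h2 : HasDerivAt (fun r : ℝ => (r, s)) ((1 : ℝ), (0 : ℝ)) r :=
    (hasDerivAt_id r).prodMk (hasDerivAt_const r s)
  exact h1.comp_hasDerivAt r h2

lemma hasDerivAt_snd (hW : ContDiffOn ℝ (⊤ : ℕ∞) W (Set.univ ×ˢ Set.Ioo (0 : ℝ) S))
    (r : ℝ) {s : ℝ} (hs : s ∈ Set.Ioo (0 : ℝ) S) :
    HasDerivAt (fun s => W (r, s)) (fderiv ℝ W (r, s) (0, 1)) s := by
  have h1 := ((contDiffAt_strip hW r hs).differentiableAt (by simp)).hasFDerivAt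
  have h2 : HasDerivAt (fun s : ℝ => (r, s)) ((0 : ℝ), (1 : ℝ)) s :=
    (hasDerivAt_const s r).prodMk (hasDerivAt_id s)
  exact h1.comp_hasDerivAt s h2

lemma contDiffOn_partial (hW : ContDiffOn ℝ (⊤ : ℕ∞) W (Set.univ ×ˢ Set.Ioo (0 : ℝ) S))
    (v : ℝ × ℝ) :
    ContDiffOn ℝ (⊤ : ℕ∞) (fun p => fderiv ℝ W p v) (Set.univ ×ˢ Set.Ioo (0 : ℝ) S) := by
  have h := hW.fderiv_of_isOpen (m := (⊤ : ℕ∞)) (isOpen_univ.prod isOpen_Ioo) (by simp)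
  exact h.clm_apply contDiffOn_const

lemma continuous_slice (hW : ContinuousOn W (Set.univ ×ˢ Set.Ioo (0 : ℝ) S))
    {s : ℝ} (hs : s ∈ Set.Ioo (0 : ℝ) S) : Continuous fun r => W (r, s) :=
  hW.comp_continuous (by fun_prop) fun _ => ⟨trivial, hs⟩

lemma intervalIntegrable_slice (hW : ContinuousOn W (Set.univ ×ˢ Set.Ioo (0 : ℝ) S))
    (r : ℝ) {T t : ℝ} (hT : 0 < T) (hTt : T ≤ t) (ht : t < S) :
    IntervalIntegrable (fun s => W (r, s)) volume T t := by
  apply ContinuousOn.intervalIntegrable_of_Icc hTt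
  refine hW.comp (by fun_prop) fun s hs => ⟨trivial, ?_, ?_⟩
  · exact hT.trans_le hs.1
  · exact hs.2.trans_lt ht

/-- Fubini on a compact rectangle inside the strip `ℝ × (0, S)`. -/
lemma swap_strip (hW : ContinuousOn W (Set.univ ×ˢ Set.Ioo (0 : ℝ) S))
    {T t a b : ℝ} (hT : 0 < T) (hTt : T ≤ t) (ht : t < S) (hab : a ≤ b) :
    ∫ s in T..t, ∫ r in a..b, W (r, s) = ∫ r in a..b, ∫ s in T..t, W (r, s) := by
  symm
  apply MeasureTheory.intervalIntegral_intervalIntegral_swap (F := fun r s => W (r, s))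
  rw [Set.uIoc_of_le hab, Set.uIoc_of_le hTt]
  have h1 : ContinuousOn W (Set.Icc a b ×ˢ Set.Icc T t) :=
    hW.mono fun p hp => ⟨trivial, hT.trans_le hp.2.1, hp.2.2.trans_lt ht⟩
  exact (h1.integrableOn_compact (isCompact_Icc.prod isCompact_Icc)).mono_set
    (Set.prod_mono Set.Ioc_subset_Icc_self Set.Ioc_subset_Icc_self)

end Strip

/-- For a radial solution of `∂ₛ G = ΔH` in dimension `n + 1`, the potential `w r = ∫ H (r, s) ds`
over `[T, t]` satisfies `r ^ n * w' r = ∫ ρ in 0..r, ρ ^ n * (G (ρ, t) - G (ρ, T))`. It is stated in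
integrated form, so that only Fubini and the fundamental theorem of calculus are needed; the flux
through the origin vanishes because of the factor `r ^ n`. -/
lemma flux_identity {n : ℕ} (hn : n ≠ 0) {S : ℝ} {G H : ℝ × ℝ → ℝ}
    (hG : ContDiffOn ℝ (⊤ : ℕ∞) G (Set.univ ×ˢ Set.Ioo (0 : ℝ) S))
    (hH : ContDiffOn ℝ (⊤ : ℕ∞) H (Set.univ ×ˢ Set.Ioo (0 : ℝ) S))
    (hpde : ∀ r : ℝ, 0 < r → ∀ s ∈ Set.Ioo (0 : ℝ) S,
      deriv (fun s => G (r, s)) s = deriv (deriv fun ρ => H (ρ, s)) r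
        + n * (deriv (fun ρ => H (ρ, s)) r / r))
    {T t a b : ℝ} (hT : 0 < T) (hTt : T ≤ t) (ht : t < S) (ha : 0 < a) (hab : a ≤ b) :
    (∫ s in T..t, H (b, s)) - ∫ s in T..t, H (a, s) =
      ∫ r in a..b, (r ^ n)⁻¹ * ∫ ρ in (0 : ℝ)..r, ρ ^ n * (G (ρ, t) - G (ρ, T)) := by
  set P : ℝ × ℝ → ℝ := fun p => fderiv ℝ H p (1, 0) with hP
  set Q : ℝ × ℝ → ℝ := fun p => fderiv ℝ G p (0, 1) with hQ
  have hPs : ContDiffOn ℝ (⊤ : ℕ∞) P (Set.univ ×ˢ Set.Ioo (0 : ℝ) S) := contDiffOn_partial hH _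
  have hQc : ContinuousOn Q (Set.univ ×ˢ Set.Ioo (0 : ℝ) S) := (contDiffOn_partial hG _).continuousOn
  have hPd : ∀ s ∈ Set.Ioo (0 : ℝ) S, (deriv fun ρ => H (ρ, s)) = fun r => P (r, s) :=
    fun s hs => funext fun r => (hasDerivAt_fst hH r hs).deriv
  have mem : ∀ s ∈ Set.Icc T t, s ∈ Set.Ioo (0 : ℝ) S :=
    fun s hs => ⟨hT.trans_le hs.1, hs.2.trans_lt ht⟩
  have step1 : ∀ s ∈ Set.Icc T t, ∀ r : ℝ, 0 < r →
      ∫ ρ in (0 : ℝ)..r, ρ ^ n * Q (ρ, s) = r ^ n * P (r, s) := by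
    intro s hs r hr
    have hPc : Continuous fun r => P (r, s) := continuous_slice hPs.continuousOn (mem s hs)
    have hQc' : Continuous fun r => Q (r, s) := continuous_slice hQc (mem s hs)
    rw [intervalIntegral.integral_eq_sub_of_hasDerivAt_of_le (f := fun r => r ^ n * P (r, s)) hr.le]
    · simp [hn]
    · exact ((continuous_pow n).mul hPc).continuousOn
    · intro ρ hρ
      have h1 := (hasDerivAt_pow n ρ).mul (hasDerivAt_fst hPs ρ (mem s hs))
      refine HasDerivAt.congr_deriv (f := fun r => r ^ n * P (r, s)) h1 ?_
      have h2 : Q (ρ, s) = fderiv ℝ P (ρ, s) (1, 0) + n * (P (ρ, s) / ρ) := by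
        have h3 := hpde ρ hρ.1 s (mem s hs)
        rwa [(hasDerivAt_snd hG ρ (mem s hs)).deriv, hPd s (mem s hs),
          (hasDerivAt_fst hPs ρ (mem s hs)).deriv] at h3
      rw [h2]
      obtain ⟨k, rfl⟩ := Nat.exists_eq_succ_of_ne_zero hn
      have := hρ.1.ne'
      field_simp
      simp [pow_succ]
      ring
    · exact ((continuous_pow n).mul hQc').intervalIntegrable _ _
  have step2 : ∀ r : ℝ, 0 < r → ∫ ρ in (0 : ℝ)..r, ρ ^ n * (G (ρ, t) - G (ρ, T)) =
      r ^ n * ∫ s in T..t, P (r, s) := by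
    intro r hr
    have h1 : ∀ ρ : ℝ, ρ ^ n * (G (ρ, t) - G (ρ, T)) = ∫ s in T..t, ρ ^ n * Q (ρ, s) := by
      intro ρ
      rw [intervalIntegral.integral_const_mul]
      congr 1
      symm
      apply intervalIntegral.integral_eq_sub_of_hasDerivAt (f := fun s => G (ρ, s))
      · intro s hs
        rw [Set.uIcc_of_le hTt] at hs
        exact hasDerivAt_snd hG ρ (mem s hs)
      · exact intervalIntegrable_slice hQc ρ hT hTt ht
    simp_rw [h1]
    have hc : ContinuousOn (fun p : ℝ × ℝ => p.1 ^ n * Q p) (Set.univ ×ˢ Set.Ioo (0 : ℝ) S) :=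
      ContinuousOn.mul (by fun_prop) hQc
    rw [← swap_strip hc hT hTt ht hr.le, ← intervalIntegral.integral_const_mul]
    apply intervalIntegral.integral_congr
    intro s hs
    rw [Set.uIcc_of_le hTt] at hs
    exact step1 s hs r hr
  rw [← intervalIntegral.integral_sub (intervalIntegrable_slice hH.continuousOn b hT hTt ht)
    (intervalIntegrable_slice hH.continuousOn a hT hTt ht)]
  have h3 : ∫ s in T..t, (H (b, s) - H (a, s)) = ∫ s in T..t, ∫ r in a..b, P (r, s) := by
    apply intervalIntegral.integral_congr
    intro s hs
    rw [Set.uIcc_of_le hTt] at hs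
    symm
    apply intervalIntegral.integral_eq_sub_of_hasDerivAt (f := fun r => H (r, s))
    · intro r _
      exact hasDerivAt_fst hH r (mem s hs)
    · exact (continuous_slice hPs.continuousOn (mem s hs)).intervalIntegrable _ _
  rw [h3, swap_strip hPs.continuousOn hT hTt ht hab]
  apply intervalIntegral.integral_congr
  intro r hr
  rw [Set.uIcc_of_le hab] at hr
  have hr0 : 0 < r := ha.trans_le hr.1
  simp only [step2 r hr0]
  rw [inv_mul_cancel_left₀ (by positivity)]

/-! ### Mass and decay from the flux identity -/

/-- A function on `(0, ∞)` that is integrable against `ρ ^ n dρ` takes arbitrarily small values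
arbitrarily far out. -/
lemma exists_lt_of_integrableOn {n : ℕ} {φ : ℝ → ℝ}
    (h : IntegrableOn (fun ρ : ℝ => ρ ^ n * φ ρ) (Set.Ioi 0)) {c : ℝ} (hc : 0 < c) (R : ℝ) :
    ∃ b, R ≤ b ∧ φ b < c := by
  by_contra! hcon
  have h1 : IntegrableOn (fun ρ : ℝ => ρ ^ n * φ ρ) (Set.Ioi (max R 1)) :=
    h.mono_set (Set.Ioi_subset_Ioi (zero_le_one.trans (le_max_right _ _)))
  have h2 : IntegrableOn (fun _ : ℝ => c) (Set.Ioi (max R 1)) := by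
    refine Integrable.mono h1 aestronglyMeasurable_const ?_
    refine (ae_restrict_iff' measurableSet_Ioi).2 (Eventually.of_forall fun ρ hρ => ?_)
    have hρ1 : R < ρ := (le_max_left _ _).trans_lt hρ
    have hρ2 : 1 < ρ := (le_max_right _ _).trans_lt hρ
    have h3 := hcon ρ hρ1.le
    have h4 : 1 ≤ ρ ^ n := one_le_pow₀ hρ2.le
    rw [Real.norm_of_nonneg hc.le,
      Real.norm_of_nonneg (mul_nonneg (by linarith) (hc.le.trans h3))]
    nlinarith
  rw [integrableOn_const_iff] at h2
  simp [hc.ne'] at h2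

/-- If `w' = F / r ^ n` and `F` had a positive limit, `w` would be nondecreasing far out, which a
positive function with arbitrarily small values far out cannot be. -/
lemma limit_nonpos {n : ℕ} {w F : ℝ → ℝ} {L : ℝ}
    (hw : ∀ a b : ℝ, 0 < a → a ≤ b → w b - w a = ∫ r in a..b, (r ^ n)⁻¹ * F r)
    (hpos : ∀ r, 0 < w r) (hsmall : ∀ c, 0 < c → ∀ R, ∃ b, R ≤ b ∧ w b < c)
    (hF : Tendsto F atTop (𝓝 L)) : L ≤ 0 := by
  by_contra! hL
  obtain ⟨R, hR⟩ := eventually_atTop.1 (hF.eventually (lt_mem_nhds hL))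
  obtain ⟨b, hb, hwb⟩ := hsmall (w (max R 1)) (hpos _) (max R 1)
  have h1 := hw (max R 1) b (zero_lt_one.trans_le (le_max_right _ _)) hb
  have h2 : 0 ≤ ∫ r in (max R 1)..b, (r ^ n)⁻¹ * F r := by
    apply intervalIntegral.integral_nonneg hb
    intro r hr
    have hr1 : 1 ≤ r := (le_max_right _ _).trans hr.1
    have := hR r ((le_max_left _ _).trans hr.1)
    positivity
  linarith

/-- If `w' = F / r ^ (k + 2)` with `F ≥ -M`, then integrating inwards from a far point where `w` is
nearly zero gives `w a ≤ M a ^ (-(k + 1))`. -/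
lemma decay_of_flux {k : ℕ} {w F : ℝ → ℝ} {M : ℝ} (hM : 0 ≤ M)
    (hw : ∀ a b : ℝ, 0 < a → a ≤ b → w b - w a = ∫ r in a..b, (r ^ (k + 2))⁻¹ * F r)
    (hsmall : ∀ c, 0 < c → ∀ R, ∃ b, R ≤ b ∧ w b < c)
    (hFc : Continuous F) (hF : ∀ r, 0 < r → -M ≤ F r) {a : ℝ} (ha : 0 < a) :
    w a ≤ M * (a ^ (k + 1))⁻¹ := by
  apply le_of_forall_pos_le_add
  intro ε hε
  obtain ⟨b, hab, hwb⟩ := hsmall ε hε a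
  have hb : 0 < b := ha.trans_le hab
  have hne : ∀ r ∈ Set.uIcc a b, r ≠ 0 := by
    intro r hr
    rw [Set.uIcc_of_le hab] at hr
    exact (ha.trans_le hr.1).ne'
  have hci : ContinuousOn (fun r : ℝ => (r ^ (k + 2))⁻¹) (Set.uIcc a b) :=
    ContinuousOn.inv₀ (by fun_prop) fun r hr => pow_ne_zero _ (hne r hr)
  have h1 : ∫ r in a..b, (r ^ (k + 2))⁻¹ =
      -(b ^ (k + 1))⁻¹ / (k + 1) - -(a ^ (k + 1))⁻¹ / (k + 1) := by
    apply intervalIntegral.integral_eq_sub_of_hasDerivAt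
      (f := fun r : ℝ => -(r ^ (k + 1))⁻¹ / (k + 1))
    · intro r hr
      have hr0 := hne r hr
      have h2 := (((hasDerivAt_pow (k + 1) r).inv (pow_ne_zero _ hr0)).neg).div_const ((k : ℝ) + 1)
      refine HasDerivAt.congr_deriv (f := fun r : ℝ => -(r ^ (k + 1))⁻¹ / (k + 1)) h2 ?_
      have : (k : ℝ) + 1 ≠ 0 := by positivity
      simp
      field_simp
      ring
    · exact hci.intervalIntegrable
  have h2 : ∫ r in a..b, -M * (r ^ (k + 2))⁻¹ ≤ ∫ r in a..b, (r ^ (k + 2))⁻¹ * F r := by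
    apply intervalIntegral.integral_mono_on hab
    · exact (continuousOn_const.mul hci).intervalIntegrable
    · exact (hci.mul hFc.continuousOn).intervalIntegrable
    · intro r hr
      have hr0 : 0 < r := ha.trans_le hr.1
      rw [mul_comm]
      exact mul_le_mul_of_nonneg_left (hF r hr0) (by positivity)
  rw [intervalIntegral.integral_const_mul, h1, ← hw a b ha hab] at h2
  have h3 : (a ^ (k + 1))⁻¹ / ((k : ℝ) + 1) ≤ (a ^ (k + 1))⁻¹ :=
    div_le_self (by positivity) (by linarith [k.cast_nonneg (α := ℝ)])
  have h4 : 0 ≤ (b ^ (k + 1))⁻¹ / ((k : ℝ) + 1) := by positivity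
  have h5 := mul_le_mul_of_nonneg_left h3 hM
  have h6 := mul_nonneg hM h4
  have h7 : -M * (-(b ^ (k + 1))⁻¹ / (k + 1) - -(a ^ (k + 1))⁻¹ / (k + 1)) =
    M * ((b ^ (k + 1))⁻¹ / ((k : ℝ) + 1)) - M * ((a ^ (k + 1))⁻¹ / ((k : ℝ) + 1)) := by ring
  linarith

/-- The theorem in the radial variable, in dimension `k + 3`, with the profile `G (r, s)` in place of
the solution: integrability at time `T` passes to `t > T` without increase of mass, and the profile
decays like `r ^ (-(k + 1) / m)`. The Aronson–Bénilan bound enters in the integrated form `hAB`. -/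
lemma radial_conclusion {k : ℕ} {m p S T t : ℝ} {G : ℝ × ℝ → ℝ} (hm : 0 < m) (hp : 0 ≤ p)
    (hG : ContDiffOn ℝ (⊤ : ℕ∞) G (Set.univ ×ˢ Set.Ioo (0 : ℝ) S))
    (hpos : ∀ r : ℝ, ∀ s ∈ Set.Ioo (0 : ℝ) S, 0 < G (r, s))
    (hpde : ∀ r : ℝ, 0 < r → ∀ s ∈ Set.Ioo (0 : ℝ) S,
      deriv (fun s => G (r, s)) s = deriv (deriv fun ρ => G (ρ, s) ^ m) r
        + ((k + 2 : ℕ) : ℝ) * (deriv (fun ρ => G (ρ, s) ^ m) r / r))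
    (hAB : ∀ r s t : ℝ, 0 < s → s ≤ t → t < S → G (r, t) ≤ G (r, s) * (t / s) ^ p)
    (hT : 0 < T) (hTt : T < t) (ht : t < S)
    (hint : IntegrableOn (fun ρ : ℝ => ρ ^ (k + 2) * G (ρ, T)) (Set.Ioi 0)) :
    IntegrableOn (fun ρ : ℝ => ρ ^ (k + 2) * G (ρ, t)) (Set.Ioi 0) ∧
    ∫ ρ in Set.Ioi (0 : ℝ), ρ ^ (k + 2) * G (ρ, t) ≤
      ∫ ρ in Set.Ioi (0 : ℝ), ρ ^ (k + 2) * G (ρ, T) ∧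
    ∃ C : ℝ, ∀ r : ℝ, 0 < r → G (r, t) ≤ C / r ^ (((k : ℝ) + 1) / m) := by
  have mem : ∀ s ∈ Set.Icc T t, s ∈ Set.Ioo (0 : ℝ) S :=
    fun s hs => ⟨hT.trans_le hs.1, hs.2.trans_lt ht⟩
  have hTm := mem T ⟨le_rfl, hTt.le⟩
  have htm := mem t ⟨hTt.le, le_rfl⟩
  set K : ℝ := (t / T) ^ p with hK
  have hK0 : 0 < K := Real.rpow_pos_of_pos (div_pos htm.1 hT) _
  -- on `[T, t]`, the profile at each time is comparable to its values at the two end times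
  have hup : ∀ r, ∀ s ∈ Set.Icc T t, G (r, s) ≤ G (r, T) * K := by
    intro r s hs
    refine (hAB r T s hT hs.1 (mem s hs).2).trans ?_
    refine mul_le_mul_of_nonneg_left ?_ (hpos r T hTm).le
    have := (mem s hs).1
    exact Real.rpow_le_rpow (by positivity) (by gcongr; exact hs.2) hp
  have hlo : ∀ r, ∀ s ∈ Set.Icc T t, G (r, t) / K ≤ G (r, s) := by
    intro r s hs
    rw [div_le_iff₀ hK0]
    refine (hAB r s t (mem s hs).1 hs.2 ht).trans ?_
    refine mul_le_mul_of_nonneg_left ?_ (hpos r s (mem s hs)).le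
    have := (mem s hs).1
    have := htm.1
    exact Real.rpow_le_rpow (by positivity) (by gcongr; exact hs.1) hp
  have hc : ∀ s ∈ Set.Ioo (0 : ℝ) S, Continuous fun r => G (r, s) :=
    fun s hs => continuous_slice hG.continuousOn hs
  have hct : Continuous fun ρ : ℝ => ρ ^ (k + 2) * G (ρ, t) := (continuous_pow _).mul (hc t htm)
  have hcT : Continuous fun ρ : ℝ => ρ ^ (k + 2) * G (ρ, T) := (continuous_pow _).mul (hc T hTm)
  have hint' : IntegrableOn (fun ρ : ℝ => ρ ^ (k + 2) * G (ρ, t)) (Set.Ioi 0) := by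
    refine Integrable.mono (hint.mul_const K)
      hct.aestronglyMeasurable ?_
    refine (ae_restrict_iff' measurableSet_Ioi).2 (Eventually.of_forall fun ρ hρ => ?_)
    have hρ : 0 < ρ := hρ
    have h1 := hpos ρ t htm
    have h2 := hpos ρ T hTm
    rw [Real.norm_of_nonneg (by positivity), Real.norm_of_nonneg (by positivity), mul_assoc]
    exact mul_le_mul_of_nonneg_left (hup ρ t ⟨hTt.le, le_rfl⟩) (by positivity)
  set H : ℝ × ℝ → ℝ := fun q => G q ^ m with hH
  have hHs : ContDiffOn ℝ (⊤ : ℕ∞) H (Set.univ ×ˢ Set.Ioo (0 : ℝ) S) :=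
    hG.rpow_const_of_ne fun q hq => ne_of_gt (hpos q.1 q.2 hq.2)
  -- `w` is the time-integrated potential, and `F r` is the flux `r ^ (k + 2) * w' r`
  set w : ℝ → ℝ := fun r => ∫ s in T..t, H (r, s) with hw
  set F : ℝ → ℝ := fun r => ∫ ρ in (0 : ℝ)..r, ρ ^ (k + 2) * (G (ρ, t) - G (ρ, T)) with hF
  have hflux : ∀ a b : ℝ, 0 < a → a ≤ b → w b - w a = ∫ r in a..b, (r ^ (k + 2))⁻¹ * F r :=
    fun a b ha hab => flux_identity (by omega) hG hHs hpde hT hTt.le ht ha hab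
  have hd : 0 < t - T := sub_pos.2 hTt
  have hwup : ∀ r, w r ≤ (t - T) * (G (r, T) * K) ^ m := by
    intro r
    have h1 : w r ≤ ∫ s in T..t, (G (r, T) * K) ^ m := by
      apply intervalIntegral.integral_mono_on hTt.le
        (intervalIntegrable_slice hHs.continuousOn r hT hTt.le ht) (by simp)
      intro s hs
      exact Real.rpow_le_rpow (hpos r s (mem s hs)).le (hup r s hs) hm.le
    simpa using h1
  have hwlo : ∀ r, (t - T) * (G (r, t) / K) ^ m ≤ w r := by
    intro r
    have h1 : ∫ s in T..t, (G (r, t) / K) ^ m ≤ w r := by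
      apply intervalIntegral.integral_mono_on hTt.le (by simp)
        (intervalIntegrable_slice hHs.continuousOn r hT hTt.le ht)
      intro s hs
      exact Real.rpow_le_rpow (div_nonneg (hpos r t htm).le hK0.le) (hlo r s hs) hm.le
    simpa using h1
  have hwpos : ∀ r, 0 < w r := fun r => (mul_pos hd
    (Real.rpow_pos_of_pos (div_pos (hpos r t htm) hK0) _)).trans_le (hwlo r)
  have hsmall : ∀ c, 0 < c → ∀ R, ∃ b, R ≤ b ∧ w b < c := by
    intro c hc R
    have h0 : 0 < (c / (t - T)) ^ m⁻¹ := Real.rpow_pos_of_pos (div_pos hc hd) _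
    obtain ⟨b, hb, hlt⟩ := exists_lt_of_integrableOn hint (div_pos h0 hK0) R
    refine ⟨b, hb, (hwup b).trans_lt ?_⟩
    rw [lt_div_iff₀ hK0] at hlt
    have h1 := Real.rpow_lt_rpow (mul_pos (hpos b T hTm) hK0).le hlt hm
    rw [Real.rpow_inv_rpow (div_pos hc hd).le hm.ne', lt_div_iff₀ hd] at h1
    linarith
  have hFd : ∀ r, F r = (∫ ρ in (0 : ℝ)..r, ρ ^ (k + 2) * G (ρ, t)) -
      ∫ ρ in (0 : ℝ)..r, ρ ^ (k + 2) * G (ρ, T) := by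
    intro r
    rw [← intervalIntegral.integral_sub]
    · simp only [hF, mul_sub]
    · exact hct.intervalIntegrable _ _
    · exact hcT.intervalIntegrable _ _
  have hFlim : Tendsto F atTop (𝓝 ((∫ ρ in Set.Ioi (0 : ℝ), ρ ^ (k + 2) * G (ρ, t)) -
      ∫ ρ in Set.Ioi (0 : ℝ), ρ ^ (k + 2) * G (ρ, T))) := by
    rw [funext hFd]
    exact (intervalIntegral_tendsto_integral_Ioi 0 hint' tendsto_id).sub
      (intervalIntegral_tendsto_integral_Ioi 0 hint tendsto_id)
  refine ⟨hint', sub_nonpos.1 (limit_nonpos hflux hwpos hsmall hFlim), ?_⟩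
  have hnn : ∀ s ∈ Set.Ioo (0 : ℝ) S, ∀ ρ : ℝ, 0 < ρ → 0 ≤ ρ ^ (k + 2) * G (ρ, s) :=
    fun s hs ρ hρ => mul_nonneg (by positivity) (hpos ρ s hs).le
  set M : ℝ := ∫ ρ in Set.Ioi (0 : ℝ), ρ ^ (k + 2) * G (ρ, T) with hMdef
  have hM : 0 ≤ M := setIntegral_nonneg measurableSet_Ioi fun ρ hρ => hnn T hTm ρ hρ
  have hFc : Continuous F := by
    apply intervalIntegral.continuous_primitive
    intro a b
    exact ((continuous_pow _).mul ((hc t htm).sub (hc T hTm))).intervalIntegrable _ _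
  have hFlo : ∀ r, 0 < r → -M ≤ F r := by
    intro r hr
    rw [hFd]
    have h1 : 0 ≤ ∫ ρ in (0 : ℝ)..r, ρ ^ (k + 2) * G (ρ, t) :=
      intervalIntegral.integral_nonneg hr.le fun ρ hρ =>
        mul_nonneg (pow_nonneg hρ.1 _) (hpos ρ t htm).le
    have h2 : ∫ ρ in (0 : ℝ)..r, ρ ^ (k + 2) * G (ρ, T) ≤ M := by
      rw [intervalIntegral.integral_of_le hr.le]
      refine setIntegral_mono_set hint ?_ Set.Ioc_subset_Ioi_self.eventuallyLE
      exact (ae_restrict_iff' measurableSet_Ioi).2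
        (Eventually.of_forall fun ρ hρ => hnn T hTm ρ hρ)
    linarith
  refine ⟨K * (M / (t - T)) ^ m⁻¹, fun r hr => ?_⟩
  have h1 := (hwlo r).trans (decay_of_flux hM hflux hsmall hFc hFlo hr)
  have hg : 0 ≤ G (r, t) / K := div_nonneg (hpos r t htm).le hK0.le
  have h2 : (G (r, t) / K) ^ m ≤ M / (t - T) * (r ^ (k + 1))⁻¹ := by
    rw [div_mul_eq_mul_div, le_div_iff₀ hd]
    linarith
  have h3 := Real.rpow_le_rpow (Real.rpow_nonneg hg _) h2 (inv_nonneg.2 hm.le)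
  rw [Real.rpow_rpow_inv hg hm.ne', Real.mul_rpow (by positivity) (by positivity),
    Real.inv_rpow (by positivity), ← Real.rpow_natCast, ← Real.rpow_mul hr.le,
    div_le_iff₀ hK0] at h3
  refine h3.trans (le_of_eq ?_)
  push_cast
  rw [← div_eq_mul_inv ((k : ℝ) + 1) m]
  ring

/-! ### The Aronson–Bénilan inequality and the extinction time -/

/-- The Aronson–Bénilan inequality says that `s ↦ φ s * s ^ (-p)` is nonincreasing. -/
lemma antitone_bound {S p : ℝ} {φ : ℝ → ℝ}
    (hd : ∀ t ∈ Set.Ioo (0 : ℝ) S, DifferentiableAt ℝ φ t)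
    (hAB : ∀ t ∈ Set.Ioo (0 : ℝ) S, deriv φ t ≤ p * (φ t / t))
    {s t : ℝ} (hs : 0 < s) (hst : s ≤ t) (ht : t < S) : φ t ≤ φ s * (t / s) ^ p := by
  have hder : ∀ τ ∈ Set.Ioo (0 : ℝ) S, HasDerivAt (fun τ => φ τ * τ ^ (-p))
      (deriv φ τ * τ ^ (-p) + φ τ * (-p * τ ^ (-p - 1))) τ := fun τ hτ =>
    (hd τ hτ).hasDerivAt.mul (Real.hasDerivAt_rpow_const (Or.inl hτ.1.ne'))
  have hanti : AntitoneOn (fun τ => φ τ * τ ^ (-p)) (Set.Ioo (0 : ℝ) S) := by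
    apply antitoneOn_of_deriv_nonpos (convex_Ioo _ _)
    · exact fun τ hτ => (hder τ hτ).continuousAt.continuousWithinAt
    · rw [interior_Ioo]
      exact fun τ hτ => (hder τ hτ).differentiableAt.differentiableWithinAt
    · rw [interior_Ioo]
      intro τ hτ
      have hτ0 := hτ.1
      rw [(hder τ hτ).deriv, Real.rpow_sub_one hτ0.ne']
      have h1 := mul_le_mul_of_nonneg_right (hAB τ hτ) (Real.rpow_nonneg hτ0.le (-p))
      have h2 : φ τ * (-p * (τ ^ (-p) / τ)) = -(p * (φ τ / τ) * τ ^ (-p)) := by ring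
      linarith
  have ht0 : 0 < t := hs.trans_le hst
  have h := hanti ⟨hs, hst.trans_lt ht⟩ ⟨ht0, ht⟩ hst
  simp only at h
  rw [Real.rpow_neg ht0.le, Real.rpow_neg hs.le, ← div_eq_mul_inv, ← div_eq_mul_inv,
    div_le_iff₀ (Real.rpow_pos_of_pos ht0 p)] at h
  rw [Real.div_rpow ht0.le hs.le]
  refine h.trans (le_of_eq ?_)
  ring

/-- Pointwise extinction of the Barenblatt solution as `t ↑ T`. -/
lemma Bb_tendsto_zero {N : ℕ} {m T k : ℝ} (hC : 0 < Cst N m) (hγ : gammaC N m < 0) (hm1 : m < 1)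
    (hk : 0 < k) (x : Euc N) :
    Tendsto (fun t => Bb N m T k x t) (𝓝[<] T) (𝓝 0) := by
  have hp : 0 < 1 / (1 - m) := by
    have : 0 < 1 - m := by linarith
    positivity
  have h0 : Tendsto (fun t => Cst N m * (T - t) / k) (𝓝[<] T) (𝓝 0) := by
    have : Continuous fun t : ℝ => Cst N m * (T - t) / k := by fun_prop
    have h := this.tendsto T
    simp only [sub_self, mul_zero, zero_div] at h
    exact h.mono_left nhdsWithin_le_nhds
  have hev : ∀ᶠ t in 𝓝[<] T, t ∈ Set.Ioo (T - 1) T := Ioo_mem_nhdsLT (by linarith)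
  have h1 : Tendsto (fun t => Cst N m * (T - t) / (k * (T - t) ^ (2 * gammaC N m) + ‖x‖ ^ 2))
      (𝓝[<] T) (𝓝 0) := by
    refine tendsto_of_tendsto_of_tendsto_of_le_of_le' tendsto_const_nhds h0 ?_ ?_
    · filter_upwards [hev] with t ht
      have : 0 < T - t := sub_pos.2 ht.2
      positivity
    · filter_upwards [hev] with t ht
      have h2 : 0 < T - t := sub_pos.2 ht.2
      -- since `γ < 0`, the factor `(T - t) ^ (2γ)` is at least `1` when `T - t ≤ 1`
      have h3 : 1 ≤ (T - t) ^ (2 * gammaC N m) :=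
        Real.one_le_rpow_of_pos_of_le_one_of_nonpos h2 (by linarith [ht.1]) (by linarith)
      have h4 : k ≤ k * (T - t) ^ (2 * gammaC N m) + ‖x‖ ^ 2 := by nlinarith [sq_nonneg ‖x‖]
      exact div_le_div_of_nonneg_left (by positivity) hk h4
  have h5 := h1.rpow_const (p := 1 / (1 - m)) (Or.inr hp.le)
  rwa [Real.zero_rpow hp.ne'] at h5

/-- Fatou's lemma along `t ↑ T`, where the Barenblatt solution vanishes pointwise. -/
lemma lintegral_at_T {N : ℕ} {m T Ts k I : ℝ} {u : Euc N → ℝ → ℝ}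
    (hC : 0 < Cst N m) (hγ : gammaC N m < 0) (hm1 : m < 1) (hT : 0 < T) (hTs : T < Ts) (hk : 0 < k)
    (hu : ContinuousOn (fun p : Euc N × ℝ => u p.1 p.2) (Set.univ ×ˢ Set.Ioo (0 : ℝ) Ts))
    (hpos : ∀ x, 0 < u x T)
    (hcontr : ∀ t ∈ Set.Ioo (0:ℝ) T,
      (∫⁻ x, ENNReal.ofReal |u x t - Bb N m T k x t|) ≤ ENNReal.ofReal I) :
    ∫⁻ x, ENNReal.ofReal (u x T) ≤ ENNReal.ofReal I := by
  have hev : ∀ᶠ t in 𝓝[<] T, t ∈ Set.Ioo (0 : ℝ) T := Ioo_mem_nhdsLT hT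
  have hlim : ∀ x, Tendsto (fun t => ENNReal.ofReal |u x t - Bb N m T k x t|) (𝓝[<] T)
      (𝓝 (ENNReal.ofReal (u x T))) := by
    intro x
    have h1 : ContinuousAt (fun t => u x t) T := by
      have h2 := hu.continuousAt ((isOpen_univ.prod isOpen_Ioo).mem_nhds
        (⟨trivial, hT, hTs⟩ : (x, T) ∈ Set.univ ×ˢ Set.Ioo (0 : ℝ) Ts))
      exact ContinuousAt.comp (f := fun t : ℝ => (x, t)) h2 (by fun_prop)
    have h2 := (h1.tendsto.mono_left (nhdsWithin_le_nhds (s := Set.Iio T))).sub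
      (Bb_tendsto_zero hC hγ hm1 hk x)
    have h3 := ENNReal.tendsto_ofReal h2.abs
    rwa [sub_zero, abs_of_pos (hpos x)] at h3
  calc ∫⁻ x, ENNReal.ofReal (u x T)
      = ∫⁻ x, liminf (fun n : ℕ => ENNReal.ofReal |u x (T - T / (n + 2)) -
          Bb N m T k x (T - T / (n + 2))|) atTop := ?_
    _ ≤ liminf (fun n : ℕ => ∫⁻ x, ENNReal.ofReal |u x (T - T / (n + 2)) -
          Bb N m T k x (T - T / (n + 2))|) atTop := ?_
    _ ≤ ENNReal.ofReal I := ?_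
  all_goals
    have hmem : ∀ n : ℕ, T - T / (n + 2) ∈ Set.Ioo (0 : ℝ) T := by
      intro n
      have h1 : 0 < T / ((n : ℝ) + 2) := by positivity
      have h2 : T / ((n : ℝ) + 2) < T := div_lt_self hT (by linarith [n.cast_nonneg (α := ℝ)])
      exact ⟨by linarith, by linarith⟩
  · have hseq : Tendsto (fun n : ℕ => T - T / ((n : ℝ) + 2)) atTop (𝓝[<] T) := by
      refine tendsto_nhdsWithin_iff.2 ⟨?_, Eventually.of_forall fun n => (hmem n).2⟩
      have h1 : Tendsto (fun n : ℕ => (n : ℝ) + 2) atTop atTop :=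
        tendsto_atTop_add_const_right _ _ tendsto_natCast_atTop_atTop
      simpa using (h1.const_div_atTop T).const_sub T
    exact lintegral_congr fun x => (((hlim x).comp hseq).liminf_eq).symm
  · refine lintegral_liminf_le fun n => ?_
    have h1 : Continuous fun x => u x (T - T / (n + 2)) :=
      hu.comp_continuous (f := fun x => (x, T - T / (n + 2))) (by fun_prop)
        fun x => ⟨trivial, (hmem n).1, (hmem n).2.trans hTs⟩
    have h2 : Measurable fun x => Bb N m T k x (T - T / (n + 2)) := by
      unfold Bb
      fun_prop
    exact ((h1.measurable.sub h2).abs).ennreal_ofReal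
  · refine liminf_le_of_frequently_le' (Frequently.of_forall fun n => hcontr _ (hmem n))

/-- A radially symmetric solution living past the extinction time T of a
Barenblatt solution B, with u₀ = B(·,0) + f, f ∈ L¹ nonnegative radial, u ≥ B up to T,
the L¹-contraction against B, and the Aronson–Bénilan inequality, becomes integrable at
t = T with ‖u(·,t)‖_{L¹} ≤ ‖f‖_{L¹} for t ∈ [T,T*), and decays like |x|^{-(N-2)/m}
for t ∈ (T,T*). -/
theorem integrable_after_T (N : ℕ) (hN : 3 ≤ N) (m T Ts k : ℝ)
    (hm0 : 0 < m) (hm1 : m < ((N : ℝ) - 2) / N)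
    (hT : 0 < T) (hTs : T < Ts) (hk : 0 < k)
    (u : Euc N → ℝ → ℝ) (f : Euc N → ℝ)
    (hf : Integrable f volume) (hfpos : ∀ x, 0 ≤ f x) (hfrad : IsRadial f)
    (hsol : IsFDESol N m Ts u (fun x => Bb N m T k x 0 + f x))
    (hu0rad : IsRadial (fun x => Bb N m T k x 0 + f x))
    (hurad : ∀ t ∈ Set.Ioo (0:ℝ) Ts, IsRadial (fun x => u x t))
    (hlow : ∀ x : Euc N, ∀ t ∈ Set.Ioo (0:ℝ) T, Bb N m T k x t ≤ u x t)
    (hcontr : ∀ t ∈ Set.Ioo (0:ℝ) T,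
      (∫⁻ x, ENNReal.ofReal |u x t - Bb N m T k x t|) ≤ ENNReal.ofReal (∫ x, f x))
    (hAB : ∀ x : Euc N, ∀ t ∈ Set.Ioo (0:ℝ) Ts,
      deriv (fun s => u x s) t ≤ u x t / ((1 - m) * t)) :
    (∀ t : ℝ, T ≤ t → t < Ts →
      Integrable (fun x => u x t) volume ∧ (∫ x, |u x t|) ≤ ∫ x, |f x|) ∧
    (∀ t : ℝ, T < t → t < Ts → ∃ C : ℝ, ∀ x : Euc N, 1 < ‖x‖ →
      u x t ≤ C / ‖x‖ ^ (((N : ℝ) - 2) / m)) := by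
  obtain ⟨k', rfl⟩ : ∃ k', N = k' + 3 := ⟨N - 3, by omega⟩
  obtain ⟨hpos, hsm, -, -, hpde⟩ := hsol
  have hN0 : (0 : ℝ) < ((k' + 3 : ℕ) : ℝ) := by positivity
  have hm2 : m * ((k' + 3 : ℕ) : ℝ) < ((k' + 3 : ℕ) : ℝ) - 2 := (lt_div_iff₀ hN0).1 hm1
  have hm3 : m < 1 := by
    by_contra! h
    nlinarith
  have h1m : 0 < 1 - m := by linarith
  have hC : 0 < Cst (k' + 3) m := by
    unfold Cst
    have : 0 < ((k' + 3 : ℕ) : ℝ) - 2 - m * ((k' + 3 : ℕ) : ℝ) := by linarith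
    positivity
  have hγ : gammaC (k' + 3) m < 0 := by
    unfold gammaC betaC
    have : 0 < ((k' + 3 : ℕ) : ℝ) - 2 - ((k' + 3 : ℕ) : ℝ) * m := by linarith
    rw [neg_div]
    exact neg_neg_of_pos (by positivity)
  -- the profile of `u` along the first coordinate axis determines `u`
  set e : Euc (k' + 3) := EuclideanSpace.single 0 1 with he
  have he1 : ‖e‖ = 1 := by simp [he]
  set G : ℝ × ℝ → ℝ := fun q => u (q.1 • e) q.2 with hGdef
  have hG : ContDiffOn ℝ (⊤ : ℕ∞) G (Set.univ ×ˢ Set.Ioo (0 : ℝ) Ts) :=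
    hsm.comp (g := fun p : Euc (k' + 3) × ℝ => u p.1 p.2) (f := fun q : ℝ × ℝ => (q.1 • e, q.2))
      (by fun_prop) fun q hq => ⟨trivial, hq.2⟩
  have hslice : ∀ s ∈ Set.Ioo (0 : ℝ) Ts, ContDiff ℝ (⊤ : ℕ∞) fun x => u x s := by
    intro s hs
    rw [← contDiffOn_univ]
    exact hsm.comp (g := fun p : Euc (k' + 3) × ℝ => u p.1 p.2) (f := fun x => (x, s))
      (by fun_prop) fun x _ => ⟨trivial, hs⟩
  have hGr : ∀ s ∈ Set.Ioo (0 : ℝ) Ts, (fun x => u x s) = fun x => G (‖x‖, s) := by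
    intro s hs
    funext x
    exact hurad s hs _ _ (by simp [norm_smul, he1])
  have hGpde : ∀ r : ℝ, 0 < r → ∀ s ∈ Set.Ioo (0 : ℝ) Ts,
      deriv (fun s => G (r, s)) s = deriv (deriv fun ρ => G (ρ, s) ^ m) r
        + ((k' + 2 : ℕ) : ℝ) * (deriv (fun ρ => G (ρ, s) ^ m) r / r) := by
    intro r hr s hs
    have hv : ContDiff ℝ 2 fun y => u y s ^ m :=
      contDiff_infty.1 ((hslice s hs).rpow_const_of_ne fun x => (hpos x s hs).ne') 2
    have hvr : IsRadial fun y => u y s ^ m := fun x y hxy => by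
      have := hurad s hs x y hxy
      simp only at this ⊢
      rw [this]
    have h1 := lapl_radial (0 : Fin (k' + 3)) hv hvr hr
    have h2 := hpde (r • e) s hs
    rw [← he] at h1
    simp only [hGdef]
    rw [h2, h1]
    push_cast
    ring_nf
  have hGAB : ∀ r s t : ℝ, 0 < s → s ≤ t → t < Ts →
      G (r, t) ≤ G (r, s) * (t / s) ^ (1 / (1 - m)) := by
    intro r s t hs hst ht
    refine antitone_bound (φ := fun s => G (r, s))
      (fun τ hτ => (hasDerivAt_snd hG r hτ).differentiableAt) (fun τ hτ => ?_) hs hst ht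
    refine (hAB (r • e) τ hτ).trans (le_of_eq ?_)
    have := hτ.1.ne'
    have := h1m.ne'
    simp only [hGdef]
    field_simp
  have hTmem : T ∈ Set.Ioo (0 : ℝ) Ts := ⟨hT, hTs⟩
  have hI0 : 0 ≤ ∫ x, f x := integral_nonneg hfpos
  have hlint := lintegral_at_T hC hγ hm3 hT hTs hk hsm.continuousOn (fun x => hpos x T hTmem) hcontr
  have hae : 0 ≤ᵐ[volume] fun x => u x T := Eventually.of_forall fun x => (hpos x T hTmem).le
  have hmeas : AEStronglyMeasurable (fun x => u x T) volume :=
    (hslice T hTmem).continuous.aestronglyMeasurable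
  have hintT : Integrable (fun x => u x T) volume :=
    ⟨hmeas, (hasFiniteIntegral_iff_ofReal hae).2 (hlint.trans_lt ENNReal.ofReal_lt_top)⟩
  have hleT : ∫ x, u x T ≤ ∫ x, f x := by
    rw [integral_eq_lintegral_of_nonneg_ae hae hmeas]
    exact ENNReal.toReal_le_of_le_ofReal hI0 hlint
  have hdim : Module.finrank ℝ (Euc (k' + 3)) - 1 = k' + 2 := by simp
  have hpolar : ∀ s ∈ Set.Ioo (0 : ℝ) Ts, (Integrable (fun x => u x s) volume ↔
      IntegrableOn (fun ρ : ℝ => ρ ^ (k' + 2) * G (ρ, s)) (Set.Ioi 0)) := by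
    intro s hs
    rw [hGr s hs, integrable_fun_norm_addHaar volume (f := fun ρ => G (ρ, s)), hdim]
    simp only [smul_eq_mul]
  have hpolar' : ∀ s ∈ Set.Ioo (0 : ℝ) Ts, ∫ x, u x s = (k' + 3 : ℕ) *
      (volume.real (Metric.ball (0 : Euc (k' + 3)) 1) *
        ∫ ρ in Set.Ioi (0 : ℝ), ρ ^ (k' + 2) * G (ρ, s)) := by
    intro s hs
    rw [hGr s hs, integral_fun_norm_addHaar volume (fun ρ => G (ρ, s)), hdim]
    simp only [smul_eq_mul, nsmul_eq_mul, finrank_euclideanSpace_fin]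
  have hmain := fun t (hTt : T < t) (ht : t < Ts) =>
    radial_conclusion hm0 (one_div_pos.2 h1m).le hG (fun r s hs => hpos (r • e) s hs) hGpde hGAB
      hT hTt ht ((hpolar T hTmem).1 hintT)
  refine ⟨fun t hTt ht => ?_, fun t hTt ht => ?_⟩
  · have htmem : t ∈ Set.Ioo (0 : ℝ) Ts := ⟨hT.trans_le hTt, ht⟩
    simp only [abs_of_pos (hpos _ t htmem), abs_of_nonneg (hfpos _)]
    rcases hTt.eq_or_lt with rfl | hlt
    · exact ⟨hintT, hleT⟩
    · obtain ⟨h1, h2, -⟩ := hmain t hlt ht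
      refine ⟨(hpolar t htmem).2 h1, le_trans ?_ hleT⟩
      rw [hpolar' t htmem, hpolar' T hTmem]
      gcongr
  · obtain ⟨-, -, C, hCb⟩ := hmain t hTt ht
    refine ⟨C, fun x hx => ?_⟩
    have h1 := hCb ‖x‖ (by linarith)
    rw [show (((k' + 3 : ℕ) : ℝ) - 2) / m = ((k' : ℝ) + 1) / m by push_cast; ring,
      congrFun (hGr t ⟨hT.trans hTt, ht⟩) x]
    exact h1
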